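/- arXiv:2605.01039 — 2 statements merged into one kernel-verified Lean document; each statement's English description precedes it below -/
import Mathlib

section
/- Let (ΔM_r)_{r≥1} be a martingale-difference sequence that is conditionally sub-Gaussian with parameter v > 0, and let M_s := Σ_{r=1}^s ΔM_r. Then for every integer t ≥ 3, P( ∃ s ∈ {1, …, t} : |M_s| ≥ √(10 · v · s · log(e + t)) ) ≤ 2 / t⁴. -/
open MeasureTheory Filter
open scoped ENNReal

/-!
Conditioning on the past multiplies the moment generating function of the partial sum `M_s` by at
most the conditional sub-Gaussian factor of the next increment, so `M_s` is sub-Gaussian with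
parameter `v s`. At the level `√(2 a v s)` its two-sided Chernoff bound is `2 exp (-a)`, which does
not depend on `s`, so a union bound over `s ≤ t` costs only a factor `t`; the choice
`a = 5 log (e + t)` absorbs it.
-/

section

open ProbabilityTheory
open scoped NNReal

variable {Ω : Type*} {m m0 : MeasurableSpace Ω} {μ : Measure Ω}

/-- `X` is conditionally sub-Gaussian given `m` with parameter `c`. This is the counterpart of
`ProbabilityTheory.HasCondSubgaussianMGF` phrased with conditional expectations instead of the
kernel `condExpKernel`, so that `Ω` need not be standard Borel. Integrability is a field because
`μ[f | m] = 0` by convention for a non-integrable `f`. -/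
structure HasCondExpSubgaussianMGF (m : MeasurableSpace Ω) {m0 : MeasurableSpace Ω} (X : Ω → ℝ)
    (c : ℝ≥0) (μ : Measure Ω) : Prop where
  integrable_exp_mul : ∀ l : ℝ, Integrable (fun ω => Real.exp (l * X ω)) μ
  condExp_exp_mul_le : ∀ l : ℝ,
    μ[fun ω => Real.exp (l * X ω) | m] ≤ᵐ[μ] fun _ => Real.exp (l ^ 2 * c / 2)

namespace HasCondExpSubgaussianMGF

variable {X Y : Ω → ℝ} {c cX cY : ℝ≥0}

lemma integral_mul_exp_mul_le [IsFiniteMeasure μ] (hm : m ≤ m0)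
    (hY : HasCondExpSubgaussianMGF m Y c μ) {f : Ω → ℝ} (hfm : StronglyMeasurable[m] f)
    (hf_nonneg : 0 ≤ f) (hf : Integrable f μ) (l : ℝ)
    (hfY : Integrable (fun ω => f ω * Real.exp (l * Y ω)) μ) :
    ∫ ω, f ω * Real.exp (l * Y ω) ∂μ ≤ (∫ ω, f ω ∂μ) * Real.exp (l ^ 2 * c / 2) := by
  have pull_out : μ[fun ω => f ω * Real.exp (l * Y ω) | m] =ᵐ[μ]
      fun ω => f ω * (μ[fun ω => Real.exp (l * Y ω) | m]) ω :=
    condExp_mul_of_stronglyMeasurable_left hfm hfY (hY.integrable_exp_mul l)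
  rw [← integral_condExp hm, ← integral_mul_const]
  refine integral_mono_ae integrable_condExp (hf.mul_const _) ?_
  filter_upwards [pull_out, hY.condExp_exp_mul_le l] with ω h_eq h_le
  exact h_eq.trans_le (mul_le_mul_of_nonneg_left h_le (hf_nonneg ω))

lemma hasSubgaussianMGF [IsZeroOrProbabilityMeasure μ] (hm : m ≤ m0)
    (hX : HasCondExpSubgaussianMGF m X c μ) : HasSubgaussianMGF X c μ where
  integrable_exp_mul := hX.integrable_exp_mul
  mgf_le l := by
    calc mgf X μ l = ∫ ω, 1 * Real.exp (l * X ω) ∂μ := by simp only [mgf, one_mul]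
      _ ≤ (∫ _, 1 ∂μ) * Real.exp (l ^ 2 * c / 2) :=
        hX.integral_mul_exp_mul_le hm stronglyMeasurable_const (fun _ => zero_le_one)
          (integrable_const 1) l (by simpa only [one_mul] using hX.integrable_exp_mul l)
      _ ≤ 1 * Real.exp (l ^ 2 * c / 2) := by
        gcongr
        simp
      _ = Real.exp (c * l ^ 2 / 2) := by rw [one_mul, mul_comm (l ^ 2)]

lemma hasSubgaussianMGF_add [IsZeroOrProbabilityMeasure μ] (hm : m ≤ m0)
    (hY : HasCondExpSubgaussianMGF m Y cY μ) (hX : HasSubgaussianMGF X cX μ)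
    (hXm : StronglyMeasurable[m] X) :
    HasSubgaussianMGF (fun ω => X ω + Y ω) (cX + cY) μ := by
  have integrable_mul (l : ℝ) :
      Integrable (fun ω => Real.exp (l * X ω) * Real.exp (l * Y ω)) μ :=
    MemLp.integrable_mul (p := 2) (q := 2) (hX.memLp_exp_mul l 2)
      ((hY.hasSubgaussianMGF hm).memLp_exp_mul l 2)
  refine ⟨fun l => by simpa only [mul_add, Real.exp_add] using integrable_mul l, fun l => ?_⟩
  calc mgf (fun ω => X ω + Y ω) μ l
      = ∫ ω, Real.exp (l * X ω) * Real.exp (l * Y ω) ∂μ := by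
        simp only [mgf, mul_add, Real.exp_add]
    _ ≤ mgf X μ l * Real.exp (l ^ 2 * cY / 2) :=
        hY.integral_mul_exp_mul_le hm (Real.continuous_exp.comp_stronglyMeasurable
          (hXm.const_mul l)) (fun _ => (Real.exp_pos _).le) (hX.integrable_exp_mul l) l
          (integrable_mul l)
    _ ≤ Real.exp (cX * l ^ 2 / 2) * Real.exp (l ^ 2 * cY / 2) := by
        gcongr
        exact hX.mgf_le l
    _ = Real.exp ((cX + cY : ℝ≥0) * l ^ 2 / 2) := by
        rw [← Real.exp_add, NNReal.coe_add]
        ring_nf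

lemma hasSubgaussianMGF_sum_Icc [IsZeroOrProbabilityMeasure μ] {ℱ : Filtration ℕ m0}
    {Y : ℕ → Ω → ℝ} {c : ℕ → ℝ≥0} (hYm : ∀ r, StronglyMeasurable[ℱ (r + 1)] (Y (r + 1)))
    (hY : ∀ r, HasCondExpSubgaussianMGF (ℱ r) (Y (r + 1)) (c (r + 1)) μ) (s : ℕ) :
    HasSubgaussianMGF (fun ω => ∑ r ∈ Finset.Icc 1 s, Y r ω) (∑ r ∈ Finset.Icc 1 s, c r) μ := by
  induction s with
  | zero => simp
  | succ s ih =>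
    have sum_measurable : StronglyMeasurable[ℱ s] (fun ω => ∑ r ∈ Finset.Icc 1 s, Y r ω) := by
      refine Finset.stronglyMeasurable_fun_sum _ fun r hr => ?_
      obtain ⟨hr_pos, hrs⟩ := Finset.mem_Icc.1 hr
      obtain ⟨r, rfl⟩ := Nat.exists_eq_add_of_le' hr_pos
      exact (hYm r).mono (ℱ.mono hrs)
    simp only [Finset.sum_Icc_succ_top (Nat.le_add_left 1 s)]
    exact (hY s).hasSubgaussianMGF_add (ℱ.le s) ih sum_measurable

end HasCondExpSubgaussianMGF

lemma measureReal_le_abs_le_of_hasSubgaussianMGF {X : Ω → ℝ} {c : ℝ≥0}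
    (hX : HasSubgaussianMGF X c μ) {ε : ℝ} (hε : 0 ≤ ε) :
    μ.real {ω | ε ≤ |X ω|} ≤ 2 * Real.exp (-ε ^ 2 / (2 * c)) := by
  calc μ.real {ω | ε ≤ |X ω|} = μ.real ({ω | ε ≤ X ω} ∪ {ω | ε ≤ (-X) ω}) := by
        simp only [le_abs, Set.ofPred_or, Pi.neg_apply]
    _ ≤ μ.real {ω | ε ≤ X ω} + μ.real {ω | ε ≤ (-X) ω} := measureReal_union_le _ _
    _ ≤ Real.exp (-ε ^ 2 / (2 * c)) + Real.exp (-ε ^ 2 / (2 * c)) :=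
        add_le_add (hX.measure_ge_le hε) (hX.neg.measure_ge_le hε)
    _ = 2 * Real.exp (-ε ^ 2 / (2 * c)) := (two_mul _).symm

lemma measureReal_sqrt_le_abs_le_of_hasSubgaussianMGF {X : Ω → ℝ} {c : ℝ≥0}
    (hX : HasSubgaussianMGF X c μ) (hc : c ≠ 0) (a : ℝ) :
    μ.real {ω | √(2 * c * a) ≤ |X ω|} ≤ 2 * Real.exp (-a) := by
  refine (measureReal_le_abs_le_of_hasSubgaussianMGF hX (Real.sqrt_nonneg _)).trans ?_
  have hc_pos : (0 : ℝ) < 2 * c := by positivity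
  gcongr
  rw [neg_div, neg_le_neg_iff, le_div_iff₀' hc_pos, Real.sq_sqrt']
  exact le_max_left _ _

lemma measureReal_exists_sqrt_le_abs_le_of_hasSubgaussianMGF {ι : Type*} {S : Finset ι}
    {X : ι → Ω → ℝ} {c : ι → ℝ≥0} (hX : ∀ i ∈ S, HasSubgaussianMGF (X i) (c i) μ)
    (hc : ∀ i ∈ S, c i ≠ 0) (a : ℝ) :
    μ.real {ω | ∃ i ∈ S, √(2 * c i * a) ≤ |X i ω|} ≤ 2 * S.card * Real.exp (-a) := by
  calc μ.real {ω | ∃ i ∈ S, √(2 * c i * a) ≤ |X i ω|}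
      = μ.real (⋃ i ∈ S, {ω | √(2 * c i * a) ≤ |X i ω|}) := by
        congr 1
        ext ω
        simp only [Set.mem_ofPred_eq, Set.mem_iUnion, exists_prop]
    _ ≤ ∑ i ∈ S, μ.real {ω | √(2 * c i * a) ≤ |X i ω|} := measureReal_biUnion_finset_le _ _
    _ ≤ ∑ _i ∈ S, 2 * Real.exp (-a) := Finset.sum_le_sum fun i hi =>
        measureReal_sqrt_le_abs_le_of_hasSubgaussianMGF (hX i hi) (hc i hi) a
    _ = 2 * S.card * Real.exp (-a) := by
        rw [Finset.sum_const, nsmul_eq_mul]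
        ring

lemma mul_exp_neg_succ_mul_log_le {x y : ℝ} (hx : 0 < x) (hxy : x ≤ y) (n : ℕ) :
    x * Real.exp (-((n + 1) * Real.log y)) ≤ 1 / x ^ n := by
  calc x * Real.exp (-((n + 1) * Real.log y))
      ≤ x * Real.exp (-((n + 1) * Real.log x)) := by gcongr
    _ = x / x ^ (n + 1) := by
        rw [Real.exp_neg, ← Nat.cast_succ, Real.exp_nat_mul, Real.exp_log hx, div_eq_mul_inv]
    _ = 1 / x ^ n := by rw [pow_succ', div_mul_cancel_left₀ hx.ne', one_div]

theorem subGaussian_mds_maximal_bound_general [IsZeroOrProbabilityMeasure μ]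
    {ℱ : Filtration ℕ m0} {ΔM : ℕ → Ω → ℝ} {c : ℕ → ℝ≥0} (hc : c 1 ≠ 0)
    (hadp : ∀ r, StronglyMeasurable[ℱ (r + 1)] (ΔM (r + 1)))
    (hsubg : ∀ r, HasCondExpSubgaussianMGF (ℱ r) (ΔM (r + 1)) (c (r + 1)) μ) (t : ℕ) (a : ℝ) :
    μ.real {ω | ∃ s ∈ Finset.Icc 1 t,
        √(2 * (∑ r ∈ Finset.Icc 1 s, c r : ℝ≥0) * a) ≤ |∑ r ∈ Finset.Icc 1 s, ΔM r ω|}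
      ≤ 2 * t * Real.exp (-a) := by
  have sum_ne_zero : ∀ s ∈ Finset.Icc 1 t, ∑ r ∈ Finset.Icc 1 s, c r ≠ 0 := fun s hs h_zero =>
    hc (Finset.sum_eq_zero_iff.1 h_zero 1 (Finset.left_mem_Icc.2 (Finset.mem_Icc.1 hs).1))
  simpa only [Nat.card_Icc, Nat.add_sub_cancel] using
    measureReal_exists_sqrt_le_abs_le_of_hasSubgaussianMGF
      (fun s _ => HasCondExpSubgaussianMGF.hasSubgaussianMGF_sum_Icc hadp hsubg s) sum_ne_zero a

end

/-- Maximal concentration event for sums of conditionally sub-Gaussian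
martingale differences: for every `t ≥ 3`, the probability that some partial
sum `M_s`, `1 ≤ s ≤ t`, exceeds `√(10 v s log(e + t))` in absolute value is at
most `2 / t⁴`. -/
theorem subGaussian_mds_maximal_bound {Ω : Type*} {m0 : MeasurableSpace Ω}
    (μ : Measure Ω) [IsProbabilityMeasure μ]
    (ℱ : Filtration ℕ m0) (ΔM : ℕ → Ω → ℝ) (v : ℝ) (hv : 0 < v)
    (hint : ∀ r, 1 ≤ r → Integrable (ΔM r) μ)
    (hadp : ∀ r, 1 ≤ r → StronglyMeasurable[ℱ r] (ΔM r))
    (hmds : ∀ r, 1 ≤ r → μ[ΔM r | ℱ (r - 1)] =ᵐ[μ] 0)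
    (hexpint : ∀ r, 1 ≤ r → ∀ l : ℝ,
      Integrable (fun ω => Real.exp (l * ΔM r ω)) μ)
    (hsubg : ∀ r, 1 ≤ r → ∀ l : ℝ,
      μ[fun ω => Real.exp (l * ΔM r ω) | ℱ (r - 1)]
        ≤ᵐ[μ] fun _ => Real.exp (l ^ 2 * v / 2))
    (M : ℕ → Ω → ℝ)
    (hM : ∀ s ω, M s ω = ∑ r ∈ Finset.Icc 1 s, ΔM r ω) :
    ∀ t : ℕ, 3 ≤ t →
      μ {ω | ∃ s ∈ Finset.Icc 1 t,
          Real.sqrt (10 * v * s * Real.log (Real.exp 1 + t)) ≤ |M s ω|}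
        ≤ ENNReal.ofReal (2 / (t : ℝ) ^ 4) := by
  intro t ht
  lift v to NNReal using hv.le
  have ht_pos : (0 : ℝ) < t := Nat.cast_pos.2 (by omega)
  have level_eq (s : ℕ) : 10 * (v : ℝ) * s * Real.log (Real.exp 1 + t) =
      2 * (∑ _r ∈ Finset.Icc 1 s, v : NNReal) * (((4 : ℕ) + 1) * Real.log (Real.exp 1 + t)) := by
    simp only [Finset.sum_const, Nat.card_Icc, Nat.add_sub_cancel, nsmul_eq_mul, NNReal.coe_mul,
      NNReal.coe_natCast]
    push_cast
    ring
  rw [← ofReal_measureReal]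
  simp only [hM, level_eq]
  refine ENNReal.ofReal_le_ofReal <| (subGaussian_mds_maximal_bound_general
    (c := fun _ => v) (NNReal.coe_pos.1 hv).ne' (fun r => hadp _ r.succ_pos)
    (fun r => ⟨hexpint _ r.succ_pos, hsubg _ r.succ_pos⟩) t _).trans ?_
  calc 2 * t * Real.exp (-(((4 : ℕ) + 1) * Real.log (Real.exp 1 + t)))
      ≤ 2 * (1 / (t : ℝ) ^ 4) := by
        rw [mul_assoc]
        gcongr
        exact mul_exp_neg_succ_mul_log_le ht_pos (by linarith [Real.exp_pos 1]) 4
    _ = 2 / (t : ℝ) ^ 4 := mul_one_div _ _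
end

section
/- Let μ be a σ-finite measure on a measurable space 𝓞 and let p, q be probability densities with respect to μ that are strictly positive μ-almost everywhere. Let X₁, …, X_t be i.i.d. random variables with density p with respect to μ, and define the log-likelihood ratio Z_t := Σ_{i=1}^t log(p(X_i)/q(X_i)) and the Bhattacharyya coefficient ρ := ∫ √(p·q) dμ. Then E[exp(−Z_t/2)] = ρ^t, and consequently P(Z_t ≤ 0) ≤ ρ^t. -/
open MeasureTheory
open scoped ENNReal

/-!
Under `P = p μ`, a single observation has
`E[exp (-log (p / q) / 2)] = ∫ p √(q / p) dμ = ∫ √(p q) dμ`. The moment generating function of a sum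
of independent variables is the product of the individual ones, and the tail bound is Chernoff's
inequality for `{Z ≤ 0}` with parameter `-1 / 2`.
-/

section MomentGeneratingFunction

open ProbabilityTheory

theorem measure_nonpos_le_ofReal_mgf {Ω : Type*} [MeasurableSpace Ω] {ν : Measure Ω}
    [IsFiniteMeasure ν] {X : Ω → ℝ} {s : ℝ} (hs : s ≤ 0)
    (hX : Integrable (fun ω ↦ Real.exp (s * X ω)) ν) :
    ν {ω | X ω ≤ 0} ≤ ENNReal.ofReal (mgf X ν s) := by
  rw [← ofReal_measureReal]
  exact ENNReal.ofReal_le_ofReal (by simpa using measure_le_le_exp_mul_mgf 0 hs hX)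

variable {ι : Type*} [Fintype ι] {Ω : ι → Type*} [∀ i, MeasurableSpace (Ω i)]
  {ν : ∀ i, Measure (Ω i)} [∀ i, SigmaFinite (ν i)] {X : ∀ i, Ω i → ℝ} {s : ℝ}

theorem integrable_exp_mul_sum_pi
    (hX : ∀ i, Integrable (fun x ↦ Real.exp (s * X i x)) (ν i)) :
    Integrable (fun ω ↦ Real.exp (s * ∑ i, X i (ω i))) (Measure.pi ν) := by
  simpa only [Finset.mul_sum, Real.exp_sum] using Integrable.fintype_prod_dep hX

theorem mgf_sum_pi :
    mgf (fun ω ↦ ∑ i, X i (ω i)) (Measure.pi ν) s = ∏ i, mgf (X i) (ν i) s := by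
  simp only [mgf, Finset.mul_sum, Real.exp_sum]
  exact integral_fintype_prod_eq_prod fun i x ↦ Real.exp (s * X i x)

end MomentGeneratingFunction

section Bhattacharyya

open ProbabilityTheory

/-- The log-likelihood ratio `∑ i, log (p (ω i) / q (ω i))` of a finite sample `ω`, for densities
`p` and `q`. Observations at which `p` or `q` vanishes contribute `0`, since `x / 0 = 0` and
`log 0 = 0` here. -/
noncomputable def logLikelihoodRatio {O ι : Type*} [Fintype ι] (p q : O → ℝ) (ω : ι → O) : ℝ :=
  ∑ i, Real.log (p (ω i) / q (ω i))

variable {O : Type*} [MeasurableSpace O] {μ : Measure O} {p q : O → ℝ}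

/-- The Bhattacharyya coefficient `∫ √(p q) dμ` of two densities with respect to `μ`. -/
noncomputable def bhattacharyyaCoeff (μ : Measure O) (p q : O → ℝ) : ℝ :=
  ∫ x, √(p x * q x) ∂μ

theorem integrable_sqrt_mul (hp : Integrable p μ) (hq : Integrable q μ) :
    Integrable (fun x ↦ √(p x * q x)) μ := by
  have hmeas : AEStronglyMeasurable (fun x ↦ √(p x * q x)) μ :=
    (hp.aemeasurable.mul hq.aemeasurable).sqrt.aestronglyMeasurable
  refine (hp.abs.add hq.abs).mono' hmeas (.of_forall fun x ↦ ?_)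
  rw [Real.norm_of_nonneg (Real.sqrt_nonneg _), Pi.add_apply]
  refine Real.sqrt_le_iff.2 ⟨by positivity, ?_⟩
  calc p x * q x ≤ |p x| * |q x| := (le_abs_self _).trans_eq (abs_mul _ _)
    _ ≤ (|p x| + |q x|) ^ 2 := by nlinarith [abs_nonneg (p x), abs_nonneg (q x)]

theorem mul_exp_neg_half_mul_log_div {a b : ℝ} (ha : 0 ≤ a) (hab : 0 < a → 0 < b) :
    a * Real.exp (-1 / 2 * Real.log (a / b)) = √(a * b) := by
  rcases ha.eq_or_lt with rfl | ha
  · simp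
  have hb : 0 < b := hab ha
  calc a * Real.exp (-1 / 2 * Real.log (a / b))
      = a * Real.exp (Real.log (b / a) / 2) := by
        rw [← inv_div b a, Real.log_inv]; ring_nf
    _ = √(a ^ 2) * √(b / a) := by
        rw [Real.exp_half, Real.exp_log (div_pos hb ha), Real.sqrt_sq ha.le]
    _ = √(a * b) := by
        rw [← Real.sqrt_mul (sq_nonneg a)]; congr 1; field_simp

theorem toReal_ofReal_smul_exp_log_div_ae_eq (hp : ∀ᵐ x ∂μ, 0 ≤ p x)
    (hpq : ∀ᵐ x ∂μ, 0 < p x → 0 < q x) :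
    (fun x ↦ (ENNReal.ofReal (p x)).toReal • Real.exp (-1 / 2 * Real.log (p x / q x)))
      =ᵐ[μ] fun x ↦ √(p x * q x) := by
  filter_upwards [hp, hpq] with x hpx hpqx
  rw [ENNReal.toReal_ofReal hpx, smul_eq_mul, mul_exp_neg_half_mul_log_div hpx hpqx]

theorem integrable_exp_log_div_withDensity (hpm : AEMeasurable p μ) (hp : ∀ᵐ x ∂μ, 0 ≤ p x)
    (hpq : ∀ᵐ x ∂μ, 0 < p x → 0 < q x) (hint : Integrable (fun x ↦ √(p x * q x)) μ) :
    Integrable (fun x ↦ Real.exp (-1 / 2 * Real.log (p x / q x)))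
      (μ.withDensity fun x ↦ ENNReal.ofReal (p x)) := by
  rw [integrable_withDensity_iff_integrable_smul₀' hpm.ennreal_ofReal
    (.of_forall fun _ ↦ ENNReal.ofReal_lt_top)]
  exact hint.congr (toReal_ofReal_smul_exp_log_div_ae_eq hp hpq).symm

theorem mgf_log_div_withDensity (hpm : AEMeasurable p μ) (hp : ∀ᵐ x ∂μ, 0 ≤ p x)
    (hpq : ∀ᵐ x ∂μ, 0 < p x → 0 < q x) :
    mgf (fun x ↦ Real.log (p x / q x)) (μ.withDensity fun x ↦ ENNReal.ofReal (p x)) (-1 / 2)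
      = bhattacharyyaCoeff μ p q := by
  rw [mgf, integral_withDensity_eq_integral_toReal_smul₀ hpm.ennreal_ofReal
    (.of_forall fun _ ↦ ENNReal.ofReal_lt_top)]
  exact integral_congr_ae (toReal_ofReal_smul_exp_log_div_ae_eq hp hpq)

theorem llr_hellinger_bound_general {ι : Type*} [Fintype ι] (hpi : Integrable p μ)
    (hp : ∀ᵐ x ∂μ, 0 ≤ p x) (hpq : ∀ᵐ x ∂μ, 0 < p x → 0 < q x)
    (hint : Integrable (fun x ↦ √(p x * q x)) μ) (P : Measure O)
    (hP : P = μ.withDensity fun x ↦ ENNReal.ofReal (p x)) :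
    (∫ ω, Real.exp (-logLikelihoodRatio p q ω / 2) ∂Measure.pi (fun _ : ι ↦ P))
        = bhattacharyyaCoeff μ p q ^ Fintype.card ι ∧
      Measure.pi (fun _ : ι ↦ P) {ω | logLikelihoodRatio p q ω ≤ 0}
        ≤ ENNReal.ofReal (bhattacharyyaCoeff μ p q ^ Fintype.card ι) := by
  have : IsFiniteMeasure P := hP ▸ isFiniteMeasure_withDensity_ofReal hpi.hasFiniteIntegral
  have hmgf : mgf (fun ω : ι → O ↦ logLikelihoodRatio p q ω) (Measure.pi fun _ ↦ P) (-1 / 2)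
      = bhattacharyyaCoeff μ p q ^ Fintype.card ι := by
    simp only [logLikelihoodRatio]
    rw [mgf_sum_pi (X := fun _ x ↦ Real.log (p x / q x)), Finset.prod_const, Finset.card_univ, hP,
      mgf_log_div_withDensity hpi.aemeasurable hp hpq]
  have hexp : Integrable (fun ω : ι → O ↦ Real.exp (-1 / 2 * logLikelihoodRatio p q ω))
      (Measure.pi fun _ ↦ P) :=
    integrable_exp_mul_sum_pi (X := fun _ x ↦ Real.log (p x / q x)) fun _ ↦
      hP ▸ integrable_exp_log_div_withDensity hpi.aemeasurable hp hpq hint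
  rw [← hmgf]
  refine ⟨?_, measure_nonpos_le_ofReal_mgf (by norm_num) hexp⟩
  simp only [mgf, div_eq_inv_mul, mul_neg, neg_mul, mul_one]

end Bhattacharyya

/-- For i.i.d. observations with density `p`, the log-likelihood ratio
`Z_t = ∑ log(p(X_i)/q(X_i))` satisfies `E[exp(-Z_t/2)] = ρ^t`, where `ρ` is the
Bhattacharyya coefficient, and hence `P(Z_t ≤ 0) ≤ ρ^t`. -/
theorem llr_hellinger_bound {O : Type*} [MeasurableSpace O]
    (μ : Measure O) [SigmaFinite μ]
    (p q : O → ℝ) (hp : Measurable p) (hq : Measurable q)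
    (hppos : ∀ᵐ x ∂μ, 0 < p x) (hqpos : ∀ᵐ x ∂μ, 0 < q x)
    (hpi : Integrable p μ) (hqi : Integrable q μ)
    (hp1 : ∫ x, p x ∂μ = 1) (hq1 : ∫ x, q x ∂μ = 1)
    (t : ℕ) (ht : 1 ≤ t)
    (ρ : ℝ) (hρ : ρ = ∫ x, Real.sqrt (p x * q x) ∂μ)
    (P : Measure O) (hP : P = μ.withDensity fun x => ENNReal.ofReal (p x))
    (Z : (Fin t → O) → ℝ)
    (hZ : ∀ ω, Z ω = ∑ i, Real.log (p (ω i) / q (ω i))) :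
    (∫ ω, Real.exp (-Z ω / 2) ∂Measure.pi (fun _ : Fin t => P)) = ρ ^ t ∧
    Measure.pi (fun _ : Fin t => P) {ω | Z ω ≤ 0} ≤ ENNReal.ofReal (ρ ^ t) := by
  obtain rfl : Z = logLikelihoodRatio p q := funext hZ
  simpa [hρ, bhattacharyyaCoeff] using llr_hellinger_bound_general (ι := Fin t) hpi
    (hppos.mono fun _ ↦ le_of_lt) (hqpos.mono fun _ h _ ↦ h) (integrable_sqrt_mul hpi hqi) P hP
end
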